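/- (Reduction, treatment version.) Let A be a random variable and V = (V_i)_{i ∈ I} a finite family of random variables whose joint law is absolutely continuous with respect to ⨂_{i ∈ I} P_{V_i} with a density that is positive almost everywhere. Then for every treatment Markov blanket J' ∈ 𝔯_A(V), the treatment Markov boundary of the subfamily (V_i)_{i ∈ J'} equals that of the full family: R_A(V_{J'}) = R_A(V). -/

import Mathlib

/-!
For `K ⊆ J`, conditional independence `A ⊥⊥ V_{J∖K} | V_K` means that
`P(A ∈ S | V_J) = P(A ∈ S | V_K)` almost surely for every Borel set `S`
(`condIndepGiven_iff_condExp`). Let `J'` be a blanket of the full family.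

If `K ⊆ J'` is a blanket of `V_{J'}`, chaining the two equalities shows that `K` is a blanket of
the full family, so the boundary of `V` is contained in that of `V_{J'}`.

Conversely, if `K` is a blanket of the full family, then `P(A ∈ S | V)` is both a function of `V_K`
and a function of `V_{J'}`. Since the joint law of `V` is equivalent to the product of its
marginals, it is then a function of `V_{K ∩ J'}` (`exists_common_factor`). Hence `K ∩ J'` is a
blanket of `V_{J'}`, which gives the other inclusion.
-/

open MeasureTheory ProbabilityTheory

/-- `X ⊥⊥ Y | W` under `μ`: conditional independence of the random elements `X` and `Y`
given the σ-algebra generated by the random element `W`. -/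
def CondIndepGiven {Ω α β γ : Type*} [mΩ : MeasurableSpace Ω] [StandardBorelSpace Ω]
    [MeasurableSpace α] [MeasurableSpace β] [MeasurableSpace γ]
    (μ : Measure Ω) [IsFiniteMeasure μ]
    (X : Ω → α) (Y : Ω → β) (W : Ω → γ) : Prop :=
  ∃ hle : MeasurableSpace.comap W inferInstance ≤ mΩ,
    CondIndepFun (MeasurableSpace.comap W inferInstance) hle X Y μ

/-- The subvector `(V_i)_{i ∈ J}` of a family of random variables. -/
def subvec {Ω I : Type*} (V : I → Ω → ℝ) (J : Set I) : Ω → (J → ℝ) :=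
  fun ω j => V j ω

/-- The joint law of `(V_i)_{i ∈ I}` is absolutely continuous w.r.t. the product
`⨂_{i ∈ I} P_{V_i}` of its one-dimensional marginal laws, with a density that is positive
almost everywhere. -/
def PositiveFamilyDensity {Ω I : Type*} [MeasurableSpace Ω] [Fintype I]
    (μ : Measure Ω) (V : I → Ω → ℝ) : Prop :=
  μ.map (fun ω i => V i ω) ≪ Measure.pi (fun i => μ.map (V i)) ∧
    ∀ᵐ x ∂(Measure.pi fun i => μ.map (V i)),
      0 < (μ.map (fun ω i => V i ω)).rnDeriv (Measure.pi fun i => μ.map (V i)) x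

/-- The joint law of `(W, (V_i)_{i ∈ I})` is absolutely continuous w.r.t. the product
`P_W ⊗ ⨂_{i ∈ I} P_{V_i}` of its one-dimensional marginal laws, with a density that is
positive almost everywhere. -/
def PositivePairDensity {Ω α I : Type*} [MeasurableSpace Ω] [MeasurableSpace α] [Fintype I]
    (μ : Measure Ω) (W : Ω → α) (V : I → Ω → ℝ) : Prop :=
  μ.map (fun ω => (W ω, fun i => V i ω)) ≪ (μ.map W).prod (Measure.pi fun i => μ.map (V i)) ∧
    ∀ᵐ x ∂((μ.map W).prod (Measure.pi fun i => μ.map (V i))),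
      0 < (μ.map (fun ω => (W ω, fun i => V i ω))).rnDeriv
            ((μ.map W).prod (Measure.pi fun i => μ.map (V i))) x

/-- The joint law of `(W, U, (V_i)_{i ∈ I})` is absolutely continuous w.r.t. the product
`P_W ⊗ P_U ⊗ ⨂_{i ∈ I} P_{V_i}` of its one-dimensional marginal laws, with a density that is
positive almost everywhere. -/
def PositiveTripleDensity {Ω I : Type*} [MeasurableSpace Ω] [Fintype I]
    (μ : Measure Ω) (W U : Ω → ℝ) (V : I → Ω → ℝ) : Prop :=
  μ.map (fun ω => (W ω, U ω, fun i => V i ω)) ≪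
      (μ.map W).prod ((μ.map U).prod (Measure.pi fun i => μ.map (V i))) ∧
    ∀ᵐ x ∂((μ.map W).prod ((μ.map U).prod (Measure.pi fun i => μ.map (V i)))),
      0 < (μ.map (fun ω => (W ω, U ω, fun i => V i ω))).rnDeriv
            ((μ.map W).prod ((μ.map U).prod (Measure.pi fun i => μ.map (V i)))) x

/-- `J ∈ 𝔯_A(V)`: `J` is a treatment Markov blanket of the family `V`,
i.e. `A ⊥⊥ V_{I∖J} | V_J`. -/
def IsTreatBlanket {Ω I : Type*} [MeasurableSpace Ω] [StandardBorelSpace Ω]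
    (μ : Measure Ω) [IsFiniteMeasure μ] (A : Ω → ℝ) (V : I → Ω → ℝ) (J : Set I) : Prop :=
  CondIndepGiven μ A (subvec V (Set.univ \ J)) (subvec V J)

/-- `J ∈ 𝔯_{Y|A}(V)`: `J` is an outcome Markov blanket of the family `V`,
i.e. `Y ⊥⊥ V_{I∖J} | (A, V_J)`. -/
def IsOutBlanket {Ω I : Type*} [MeasurableSpace Ω] [StandardBorelSpace Ω]
    (μ : Measure Ω) [IsFiniteMeasure μ] (A Y : Ω → ℝ) (V : I → Ω → ℝ) (J : Set I) : Prop :=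
  CondIndepGiven μ Y (subvec V (Set.univ \ J)) (fun ω => (A ω, subvec V J ω))

/-- `R_A(V_J)`: the treatment Markov boundary of the subfamily `(V_i)_{i ∈ J}`, i.e. the
intersection of all `J' ⊆ J` such that `A ⊥⊥ V_{J∖J'} | V_{J'}`. -/
def treatBoundary {Ω I : Type*} [MeasurableSpace Ω] [StandardBorelSpace Ω]
    (μ : Measure Ω) [IsFiniteMeasure μ] (A : Ω → ℝ) (V : I → Ω → ℝ) (J : Set I) : Set I :=
  ⋂₀ {J' : Set I | J' ⊆ J ∧ CondIndepGiven μ A (subvec V (J \ J')) (subvec V J')}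

/-- `R_{Y|A}(V_J)`: the outcome Markov boundary of the subfamily `(V_i)_{i ∈ J}`, i.e. the
intersection of all `J' ⊆ J` such that `Y ⊥⊥ V_{J∖J'} | (A, V_{J'})`. -/
def outBoundary {Ω I : Type*} [MeasurableSpace Ω] [StandardBorelSpace Ω]
    (μ : Measure Ω) [IsFiniteMeasure μ] (A Y : Ω → ℝ) (V : I → Ω → ℝ) (J : Set I) : Set I :=
  ⋂₀ {J' : Set I | J' ⊆ J ∧
        CondIndepGiven μ Y (subvec V (J \ J')) (fun ω => (A ω, subvec V J' ω))}

/-- `A` is a binary treatment taking values in `{0, 1}`. -/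
def IsBinary {Ω : Type*} (A : Ω → ℝ) : Prop :=
  ∀ ω, A ω = 0 ∨ A ω = 1

/-- Consistency of the observed outcome `Y` with the potential outcomes `Y₀, Y₁`:
`Y = Y₁` a.s. on `{A = 1}` and `Y = Y₀` a.s. on `{A = 0}`. -/
def Consistency {Ω : Type*} [MeasurableSpace Ω] (μ : Measure Ω) (A Y Y0 Y1 : Ω → ℝ) : Prop :=
  (∀ᵐ ω ∂μ, A ω = 1 → Y ω = Y1 ω) ∧ (∀ᵐ ω ∂μ, A ω = 0 → Y ω = Y0 ω)

/-- The random vector `C` controls for confounding: `Y_a ⊥⊥ A | C` for `a = 0, 1`. -/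
def ControlsConfounding {Ω γ : Type*} [MeasurableSpace Ω] [StandardBorelSpace Ω]
    [MeasurableSpace γ] (μ : Measure Ω) [IsFiniteMeasure μ]
    (A Y0 Y1 : Ω → ℝ) (C : Ω → γ) : Prop :=
  CondIndepGiven μ Y0 A C ∧ CondIndepGiven μ Y1 A C

lemma measurable_subvec {Ω I : Type*} [MeasurableSpace Ω] {V : I → Ω → ℝ}
    (hV : ∀ i, Measurable (V i)) (J : Set I) : Measurable (subvec V J) :=
  measurable_pi_lambda _ fun j => hV j

lemma comap_subvec_mono {Ω I : Type*} (V : I → Ω → ℝ) {K J : Set I} (h : K ⊆ J) :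
    MeasurableSpace.comap (subvec V K) inferInstance ≤
      MeasurableSpace.comap (subvec V J) inferInstance := by
  have : subvec V K = (fun (z : J → ℝ) (k : K) => z ⟨k, h k.2⟩) ∘ subvec V J := rfl
  rw [this, ← MeasurableSpace.comap_comp]
  exact MeasurableSpace.comap_mono (Measurable.comap_le (by fun_prop))

/-- For `K ⊆ J`, observing `V_J` is the same as observing the pair `(V_K, V_{J∖K})`. -/
lemma comap_subvec_prod {Ω I : Type*} (V : I → Ω → ℝ) {K J : Set I} (h : K ⊆ J) :
    MeasurableSpace.comap (fun ω => (subvec V K ω, subvec V (J \ K) ω)) inferInstance =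
      MeasurableSpace.comap (subvec V J) inferInstance := by
  classical
  apply le_antisymm
  · have : (fun ω => (subvec V K ω, subvec V (J \ K) ω)) =
        (fun (z : J → ℝ) => ((fun k : K => z ⟨k, h k.2⟩),
          (fun k : (J \ K : Set I) => z ⟨k, k.2.1⟩))) ∘ subvec V J := rfl
    rw [this, ← MeasurableSpace.comap_comp]
    exact MeasurableSpace.comap_mono (Measurable.comap_le (by fun_prop))
  · have : subvec V J = (fun (p : (K → ℝ) × ((J \ K : Set I) → ℝ)) (j : J) =>
        if hj : (j : I) ∈ K then p.1 ⟨j, hj⟩ else p.2 ⟨j, j.2, hj⟩) ∘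
          (fun ω => (subvec V K ω, subvec V (J \ K) ω)) := by
      ext ω j
      by_cases hj : (j : I) ∈ K <;> simp [subvec, hj]
    rw [this, ← MeasurableSpace.comap_comp]
    refine MeasurableSpace.comap_mono (Measurable.comap_le (measurable_pi_lambda _ fun j => ?_))
    by_cases hj : (j : I) ∈ K <;> simp only [hj, dite_true, dite_false] <;> fun_prop

/-- For `K ⊆ J`, the relation `A ⊥⊥ V_{J∖K} | V_K` says that conditioning an event `{A ∈ S}` on
`V_J` gives no more than conditioning it on `V_K`. In this form the blanket property can be chained
along inclusions. -/
lemma condIndepGiven_iff_condExp {Ω I : Type*} [MeasurableSpace Ω] [StandardBorelSpace Ω]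
    [Fintype I] (μ : Measure Ω) [IsProbabilityMeasure μ] {A : Ω → ℝ} {V : I → Ω → ℝ}
    (hA : Measurable A) (hV : ∀ i, Measurable (V i)) {K J : Set I} (h : K ⊆ J) :
    CondIndepGiven μ A (subvec V (J \ K)) (subvec V K) ↔
      ∀ S, MeasurableSet S →
        μ⟦A ⁻¹' S | MeasurableSpace.comap (subvec V J) inferInstance⟧ =ᵐ[μ]
          μ⟦A ⁻¹' S | MeasurableSpace.comap (subvec V K) inferInstance⟧ := by
  have hK := measurable_subvec hV K
  have hJ := measurable_subvec hV J
  have hD := measurable_subvec hV (J \ K)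
  constructor
  · rintro ⟨hle, hci⟩ S hS
    have hker := (condIndepFun_iff_condDistrib_prod_ae_eq_prodMkRight hA hD hK).1 hci.symm
    have hker' := ae_of_ae_map (hK.prodMk hD).aemeasurable hker
    have h1 := condDistrib_ae_eq_condExp (μ := μ) (hK.prodMk hD) hA hS
    have h2 := condDistrib_ae_eq_condExp (μ := μ) hK hA hS
    rw [comap_subvec_prod V h] at h1
    filter_upwards [hker', h1, h2] with ω e e1 e2
    rw [← e1, ← e2, e]
    simp
  · intro H
    refine ⟨hK.comap_le, ?_⟩
    rw [condIndepFun_iff_condExp_inter_preimage_eq_mul hA hD]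
    intro S T hS hT
    have hmono := comap_subvec_mono V h
    have hT' : MeasurableSet[MeasurableSpace.comap (subvec V J) inferInstance]
        (subvec V (J \ K) ⁻¹' T) :=
      comap_subvec_mono V Set.sdiff_subset _ ⟨T, hT, rfl⟩
    have hi : Integrable ((A ⁻¹' S).indicator fun _ => (1 : ℝ)) μ :=
      (integrable_const _).indicator (hA hS)
    have hiT : Integrable ((subvec V (J \ K) ⁻¹' T).indicator fun _ => (1 : ℝ)) μ :=
      (integrable_const _).indicator (hD hT)
    -- Condition on the larger σ-algebra first and pull the event `{V_{J∖K} ∈ T}` out.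
    have e1 : μ⟦A ⁻¹' S ∩ subvec V (J \ K) ⁻¹' T |
        MeasurableSpace.comap (subvec V J) inferInstance⟧ =ᵐ[μ]
        μ⟦A ⁻¹' S | MeasurableSpace.comap (subvec V K) inferInstance⟧ *
          (subvec V (J \ K) ⁻¹' T).indicator (fun _ => (1 : ℝ)) := by
      rw [Set.inter_comm, ← Set.indicator_indicator]
      filter_upwards [condExp_indicator hi hT', H S hS] with ω a b
      rw [a, Pi.mul_apply, ← b]
      by_cases hω : ω ∈ subvec V (J \ K) ⁻¹' T <;> simp [hω]
    refine (condExp_condExp_of_le hmono hJ.comap_le).symm.trans ?_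
    refine (condExp_congr_ae e1).trans ?_
    refine condExp_mul_of_stronglyMeasurable_left stronglyMeasurable_condExp ?_ hiT
    have : μ⟦A ⁻¹' S | MeasurableSpace.comap (subvec V K) inferInstance⟧ *
          (subvec V (J \ K) ⁻¹' T).indicator (fun _ => (1 : ℝ)) =
        (subvec V (J \ K) ⁻¹' T).indicator
          (μ⟦A ⁻¹' S | MeasurableSpace.comap (subvec V K) inferInstance⟧) := by
      ext ω
      by_cases hω : ω ∈ subvec V (J \ K) ⁻¹' T <;> simp [hω]
    rw [this]
    exact integrable_condExp.indicator (hD hT)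

/-- Under a positive joint density, a random variable that is almost surely a function of `V_K` and
also of `V_J` is almost surely a function of `V_{K ∩ J}`. Positivity makes the joint law equivalent
to the product of the marginals, and for the latter Fubini allows the coordinates outside `J` to be
replaced by constants inside `g`. -/
lemma exists_common_factor {Ω I : Type*} [MeasurableSpace Ω] [Fintype I]
    (μ : Measure Ω) [IsProbabilityMeasure μ] {V : I → Ω → ℝ}
    (hV : ∀ i, Measurable (V i)) (hpos : PositiveFamilyDensity μ V) {K J : Set I}
    {g : (K → ℝ) → ℝ} {h : (J → ℝ) → ℝ} (hg : Measurable g) (hh : Measurable h)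
    (hgh : ∀ᵐ ω ∂μ, g (subvec V K ω) = h (subvec V J ω)) :
    ∃ k : ((K ∩ J : Set I) → ℝ) → ℝ, Measurable k ∧
      ∀ᵐ ω ∂μ, k (subvec V (K ∩ J) ω) = h (subvec V J ω) := by
  classical
  obtain ⟨hac, hrn⟩ := hpos
  have hVm : Measurable (fun ω i => V i ω) := measurable_pi_lambda _ hV
  have : ∀ i, IsProbabilityMeasure (μ.map (V i)) := fun i =>
    Measure.isProbabilityMeasure_map (hV i).aemeasurable
  have hac' : Measure.pi (fun i => μ.map (V i)) ≪ μ.map (fun ω i => V i ω) := by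
    have hw := withDensity_absolutelyContinuous' (μ := Measure.pi (fun i => μ.map (V i)))
      (Measure.measurable_rnDeriv (μ.map (fun ω i => V i ω)) _).aemeasurable
      (hrn.mono fun x hx => hx.ne')
    rwa [Measure.withDensity_rnDeriv_eq _ _ hac] at hw
  -- The identity transfers from the joint law to the product measure.
  have hπ : ∀ᵐ x ∂Measure.pi (fun i => μ.map (V i)),
      g (fun k : K => x k) = h (fun j : J => x j) := by
    refine hac'.ae_le ((ae_map_iff hVm.aemeasurable ?_).2 ?_)
    · exact measurableSet_eq_fun (by fun_prop) (by fun_prop)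
    · exact hgh
  have hmp := measurePreserving_piEquivPiSubtypeProd (fun i => μ.map (V i)) (· ∈ J)
  have hprod := (hmp.symm).quasiMeasurePreserving.ae hπ
  -- Freeze the coordinates outside `J` at a generic value `v`.
  have hswap := Measure.ae_ae_of_ae_prod
    (Measure.measurePreserving_swap.quasiMeasurePreserving.ae hprod)
  obtain ⟨v, hv⟩ := hswap.exists
  refine ⟨fun z => g fun k => if hk : (k : I) ∈ J then z ⟨k, k.2, hk⟩ else v ⟨k, hk⟩, ?_, ?_⟩
  · refine hg.comp (measurable_pi_lambda _ fun k => ?_)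
    by_cases hk : (k : I) ∈ J <;> simp only [hk, dite_true, dite_false] <;> fun_prop
  · have hfst := (Measure.quasiMeasurePreserving_fst.comp hmp.quasiMeasurePreserving).ae hv
    have hlaw := ae_of_ae_map hVm.aemeasurable (hac.ae_le hfst)
    filter_upwards [hlaw] with ω hω
    have hsub : subvec V J ω = fun j : J => V j ω := rfl
    simpa [subvec, hsub, MeasurableEquiv.piEquivPiSubtypeProd, Equiv.piEquivPiSubtypeProd] using hω

/-- Reduction, treatment version: for every treatment Markov blanket
`J' ∈ 𝔯_A(V)`, the treatment Markov boundary of the subfamily `(V_i)_{i ∈ J'}` equals that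
of the full family: `R_A(V_{J'}) = R_A(V)`. -/
theorem treatBoundary_reduce
    {Ω I : Type*} [MeasurableSpace Ω] [StandardBorelSpace Ω] [Fintype I]
    (μ : Measure Ω) [IsProbabilityMeasure μ]
    (A : Ω → ℝ) (V : I → Ω → ℝ)
    (hA : Measurable A) (hV : ∀ i, Measurable (V i))
    (hpos : PositiveFamilyDensity μ V)
    (J' : Set I) (hJ' : IsTreatBlanket μ A V J') :
    treatBoundary μ A V J' = treatBoundary μ A V Set.univ := by
  have hJ := (condIndepGiven_iff_condExp μ hA hV (Set.subset_univ J')).1 hJ'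
  apply Set.Subset.antisymm
  · intro i hi K hK
    refine (hi (K ∩ J') ⟨Set.inter_subset_right, ?_⟩).1
    -- `K ∩ J'` is again a blanket: `P(A ∈ S | V)` is a function of `V_K` and of `V_{J'}`, hence of
    -- `V_{K ∩ J'}`.
    have hKc := (condIndepGiven_iff_condExp μ hA hV (Set.subset_univ K)).1 hK.2
    rw [condIndepGiven_iff_condExp μ hA hV Set.inter_subset_right]
    intro S hS
    obtain ⟨g, hg, hgeq⟩ := (stronglyMeasurable_condExp (m := MeasurableSpace.comap (subvec V K)
      inferInstance) (μ := μ) (f := (A ⁻¹' S).indicator fun _ => (1 : ℝ))).exists_eq_measurable_comp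
    obtain ⟨h, hh, hheq⟩ := (stronglyMeasurable_condExp (m := MeasurableSpace.comap (subvec V J')
      inferInstance) (μ := μ) (f := (A ⁻¹' S).indicator fun _ => (1 : ℝ))).exists_eq_measurable_comp
    obtain ⟨k, hk, hkeq⟩ := exists_common_factor μ hV hpos (K := K) (J := J')
      hg.measurable hh.measurable (by
        filter_upwards [hJ S hS, hKc S hS] with ω a b
        have a' := congrFun hgeq ω
        have b' := congrFun hheq ω
        simp only [Function.comp] at a' b'
        rw [← a', ← b', ← a, ← b])
    have hkJ : k ∘ subvec V (K ∩ J') =ᵐ[μ]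
        μ⟦A ⁻¹' S | MeasurableSpace.comap (subvec V J') inferInstance⟧ := by
      rw [hheq]; exact hkeq
    have hmeas : StronglyMeasurable[MeasurableSpace.comap (subvec V (K ∩ J')) inferInstance]
        (k ∘ subvec V (K ∩ J')) :=
      (hk.comp (comap_measurable _)).stronglyMeasurable
    have hle := (measurable_subvec hV (K ∩ J')).comap_le
    have htower := condExp_condExp_of_le (μ := μ)
      (f := (A ⁻¹' S).indicator fun _ => (1 : ℝ))
      (comap_subvec_mono V (Set.inter_subset_right (s := K) (t := J')))
      (measurable_subvec hV J').comap_le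
    -- A version of `P(A ∈ S | V_{J'})` measurable for the smaller σ-algebra equals
    -- `P(A ∈ S | V_{K ∩ J'})` by the tower property.
    have hself := condExp_of_stronglyMeasurable hle hmeas
      (integrable_condExp.congr hkJ.symm)
    calc _ =ᵐ[μ] k ∘ subvec V (K ∩ J') := hkJ.symm
      _ =ᵐ[μ] _ := by rw [← hself]; exact (condExp_congr_ae hkJ).trans htower
  · intro i hi K hK
    refine hi K ⟨Set.subset_univ K, ?_⟩
    rw [condIndepGiven_iff_condExp μ hA hV (Set.subset_univ K)]
    have hKJ := (condIndepGiven_iff_condExp μ hA hV hK.1).1 hK.2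
    exact fun S hS => (hJ S hS).trans (hKJ S hS)
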